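/- arXiv:2601.18691 — 6 statements merged into one kernel-verified Lean document; each statement's English description precedes it below -/
import Mathlib

section
/- For every subset Z ⊆ F_q^v∖{0} and every ε_0 ∈ 𝓔, N_Z(ε_0) = (1/|𝓔|)·∑_ψ ψ(ε_0)^{−1}·∏_{α ∈ F_q^v∖Z} ( ∑_{a ∈ F_q^*} ψ(a·\bar{P_α}) ), where ψ ranges over all additive characters of 𝓔 and \bar{P_α} denotes the image of P_α under the quotient map F_q[x_1,…,x_v] → 𝓔. -/
/-!
The proof is Fourier inversion on the finite group `𝓔`, after parametrizing the polynomials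
counted on the left.

A polynomial with all individual degrees at most `q - 1` is determined by its values on `F ^ v`,
and the `Ppoly q v α` are the indicator functions of the points `α`. So the reduced polynomials
with zero set exactly `Z` are the sums `∑ α ∉ Z, h α • P_α` with `h : Zᶜ → Fˣ`, each arising from a
unique `h` (`eq_combo`, `combo_injective`). Expanding the product of sums on the right-hand side over
all such `h` turns the `ψ`-term into `∑ h, ψ (e_h - ε₀)`, where `e_h ∈ 𝓔` is the image of
`∑ α ∉ Z, h α • P_α`, and orthogonality of characters leaves `|𝓔|` times the number of `h` whose combination maps to `ε₀`.

Finiteness of `𝓔` (`finite_quot`) holds because `𝓔` is a finitely generated `F`-algebra whose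
generators are nilpotent, hence integral.
-/

open MvPolynomial

attribute [local instance] Classical.propDecidable

/-- `P_α = ∏ i, (1 - (x_i - c_i)^(q-1))`. -/
noncomputable def Ppoly {F : Type} [Field F] (q v : ℕ) (c : Fin v → F) :
    MvPolynomial (Fin v) F :=
  ∏ i : Fin v, (1 - (X i - C (c i)) ^ (q - 1))

/-- The ideal `⟨x_1^{i_1} ⋯ x_v^{i_v} : i_1 + ⋯ + i_v = n⟩` of `F[x_1, …, x_v]`. -/
noncomputable def degIdeal (F : Type) [Field F] (v n : ℕ) :
    Ideal (MvPolynomial (Fin v) F) :=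
  Ideal.span {m : MvPolynomial (Fin v) F |
    ∃ i : Fin v → ℕ, (∑ j : Fin v, i j) = n ∧ m = ∏ j : Fin v, X j ^ i j}

theorem Ppoly_eq_indicator {F : Type} [Field F] [Fintype F] (v : ℕ) (c : Fin v → F) :
    Ppoly (Fintype.card F) v c = indicator c := rfl

theorem mem_restrictDegree_iff_degreeOf {F : Type} [Field F] {v n : ℕ}
    (f : MvPolynomial (Fin v) F) :
    f ∈ restrictDegree (Fin v) F n ↔ ∀ i, f.degreeOf i ≤ n := by
  simp only [mem_restrictDegree, degreeOf_le_iff]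
  exact ⟨fun h i m hm => h m hm i, fun h m hm i => h i m hm⟩

theorem finite_quot (F : Type) [Field F] [Finite F] (v n : ℕ) :
    Finite (MvPolynomial (Fin v) F ⧸ degIdeal F v n) := by
  have hX : ∀ i : Fin v, (Ideal.Quotient.mk (degIdeal F v n) (X i)) ^ n = 0 := by
    intro i
    rw [← map_pow, Ideal.Quotient.eq_zero_iff_mem]
    refine Ideal.subset_span ⟨Pi.single i n, by simp, ?_⟩
    rw [Finset.prod_eq_single i]
    · simp
    · intro j _ hj
      simp [hj]
    · simp
  have : Algebra.IsIntegral F (MvPolynomial (Fin v) F ⧸ degIdeal F v n) := by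
    refine ⟨fun x => ?_⟩
    obtain ⟨f, rfl⟩ := Ideal.Quotient.mk_surjective x
    induction f using MvPolynomial.induction_on with
    | C a => exact isIntegral_algebraMap (R := F) (x := a)
    | add f g hf hg => rw [map_add]; exact hf.add hg
    | mul_X f i hf =>
      rw [map_mul]
      refine hf.mul ?_
      -- For `n = 0` the quotient is trivial, and `x ^ (n + 1) = 0` covers that case as well.
      refine IsIntegral.of_pow (Nat.succ_pos n) ?_
      rw [pow_succ, hX, zero_mul]
      exact isIntegral_zero
  have : Module.Finite F (MvPolynomial (Fin v) F ⧸ degIdeal F v n) := Algebra.IsIntegral.finite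
  exact Module.finite_of_finite F

/-- The polynomial with value `h α` at each point `α ∉ Z` and `0` on `Z`, written as a combination
of indicator polynomials. -/
noncomputable def combo {F : Type} [Field F] [Fintype F] {v : ℕ} (Z : Finset (Fin v → F))
    (h : {α // α ∈ Zᶜ} → Fˣ) : MvPolynomial (Fin v) F :=
  ∑ α, C (h α : F) * Ppoly (Fintype.card F) v α.1

theorem eval_combo {F : Type} [Field F] [Fintype F] {v : ℕ} (Z : Finset (Fin v → F))
    (h : {α // α ∈ Zᶜ} → Fˣ) (x : Fin v → F) :
    eval x (combo Z h) = if hx : x ∈ Zᶜ then (h ⟨x, hx⟩ : F) else 0 := by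
  simp only [combo, map_sum, map_mul, eval_C, Ppoly_eq_indicator]
  split_ifs with hx
  · rw [Finset.sum_eq_single ⟨x, hx⟩]
    · rw [eval_indicator_apply_eq_one, mul_one]
    · intro b _ hb
      rw [eval_indicator_apply_eq_zero, mul_zero]
      rintro rfl
      exact hb rfl
    · simp
  · refine Finset.sum_eq_zero fun b _ => ?_
    rw [eval_indicator_apply_eq_zero, mul_zero]
    rintro rfl
    exact hx b.2

theorem combo_mem {F : Type} [Field F] [Fintype F] {v : ℕ} (Z : Finset (Fin v → F))
    (h : {α // α ∈ Zᶜ} → Fˣ) :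
    combo Z h ∈ restrictDegree (Fin v) F (Fintype.card F - 1) := by
  refine Submodule.sum_mem _ fun α _ => ?_
  rw [C_mul', Ppoly_eq_indicator]
  exact Submodule.smul_mem _ _ (indicator_mem_restrictDegree _)

/-- A reduced polynomial with zero set exactly `Z` is the combination of indicators with
coefficients its values off `Z`, since reduced polynomials are determined by their values. -/
theorem eq_combo {F : Type} [Field F] [Fintype F] {v : ℕ} (Z : Finset (Fin v → F))
    (f : MvPolynomial (Fin v) F) (hf : ∀ x, eval x f = 0 ↔ x ∈ Z)
    (hd : f ∈ restrictDegree (Fin v) F (Fintype.card F - 1)) :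
    ∃ h, combo Z h = f := by
  refine ⟨fun α => Units.mk0 (eval α.1 f)
    (fun h0 => Finset.mem_compl.1 α.2 ((hf _).1 h0)), ?_⟩
  rw [← sub_eq_zero]
  refine eq_zero_of_eval_eq_zero _ _ _ (fun x => ?_) (Submodule.sub_mem _ (combo_mem Z _) hd)
  rw [map_sub, eval_combo]
  split_ifs with hx
  · simp
  · rw [Finset.mem_compl, not_not] at hx
    rw [(hf x).2 hx, sub_zero]

theorem combo_injective {F : Type} [Field F] [Fintype F] {v : ℕ} (Z : Finset (Fin v → F)) :
    Function.Injective (combo Z) := by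
  intro h k hk
  funext α
  have := congrArg (eval α.1) hk
  rw [eval_combo, eval_combo, dif_pos α.2, dif_pos α.2] at this
  exact Units.ext this

/-- The polynomials counted by `N_Z(ε₀)` correspond to the coefficient families `h : Zᶜ → Fˣ`
whose combination maps to `ε₀`. -/
theorem card_eq_card_combo {F : Type} [Field F] [Fintype F] {v : ℕ} (Z : Finset (Fin v → F))
    {ℓ : ℕ} (ε₀ : MvPolynomial (Fin v) F ⧸ degIdeal F v ℓ) :
    Nat.card {f : MvPolynomial (Fin v) F //
        (∀ x : Fin v → F, MvPolynomial.eval x f = 0 ↔ x ∈ Z) ∧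
        (∀ i : Fin v, f.degreeOf i ≤ Fintype.card F - 1) ∧
        Ideal.Quotient.mk (degIdeal F v ℓ) f = ε₀} =
      Nat.card {h : {α // α ∈ Zᶜ} → Fˣ //
        Ideal.Quotient.mk (degIdeal F v ℓ) (combo Z h) = ε₀} := by
  symm
  refine Nat.card_congr (Equiv.ofBijective
    (fun h => ⟨combo Z h.1, fun x => ?_,
      (mem_restrictDegree_iff_degreeOf _).1 (combo_mem Z h.1), h.2⟩) ⟨?_, ?_⟩)
  · rw [eval_combo]
    split_ifs with hx
    · simpa using hx
    · simpa using hx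
  · intro h k hk
    exact Subtype.ext (combo_injective Z (congrArg Subtype.val hk))
  · rintro ⟨f, hf, hd, he⟩
    obtain ⟨h, rfl⟩ := eq_combo Z f hf ((mem_restrictDegree_iff_degreeOf _).2 hd)
    exact ⟨⟨h, he⟩, rfl⟩

/-- Expansion of the product of sums over `Fˣ` into a sum over coefficient families. -/
theorem prod_sum_eq_sum_combo {F : Type} [Field F] [Fintype F] {v : ℕ} (Z : Finset (Fin v → F))
    {ℓ : ℕ} (ψ : AddChar (MvPolynomial (Fin v) F ⧸ degIdeal F v ℓ) ℂ) :
    ∏ α ∈ Zᶜ, ∑ a : Fˣ,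
        ψ (Ideal.Quotient.mk (degIdeal F v ℓ) (C (a : F) * Ppoly (Fintype.card F) v α)) =
      ∑ h : {α // α ∈ Zᶜ} → Fˣ, ψ (Ideal.Quotient.mk (degIdeal F v ℓ) (combo Z h)) := by
  rw [← Finset.prod_coe_sort, Finset.prod_univ_sum, Fintype.piFinset_univ]
  refine Finset.sum_congr rfl fun h _ => ?_
  rw [combo, map_sum]
  exact (map_prod ψ.toMonoidHom _ _).symm

/-- Character-sum formula for `N_Z(ε₀)`:
`N_Z(ε₀) = (1/|𝓔|) ∑_ψ ψ(ε₀)⁻¹ ∏_{α ∈ F_q^v ∖ Z} (∑_{a ∈ F_q^*} ψ(a ⋅ P̄_α))`,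
where `ψ` runs over all additive characters of `𝓔`. -/
theorem stmt_4 {p : ℕ} [Fact p.Prime] {F : Type} [Field F] [Fintype F] [CharP F p]
    (q : ℕ) (hq : Fintype.card F = q) (v : ℕ) (hv : 1 ≤ v)
    (ℓ : ℕ) (hℓ : 1 ≤ ℓ) (hℓ' : ℓ ≤ v * (q - 1))
    (Z : Finset (Fin v → F)) (hZ : (0 : Fin v → F) ∉ Z)
    (ε₀ : MvPolynomial (Fin v) F ⧸ degIdeal F v ℓ) :
    (Nat.card {f : MvPolynomial (Fin v) F //
        (∀ x : Fin v → F, MvPolynomial.eval x f = 0 ↔ x ∈ Z) ∧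
        (∀ i : Fin v, f.degreeOf i ≤ q - 1) ∧
        Ideal.Quotient.mk (degIdeal F v ℓ) f = ε₀} : ℂ) =
      (Nat.card (MvPolynomial (Fin v) F ⧸ degIdeal F v ℓ) : ℂ)⁻¹ *
        ∑ᶠ ψ : AddChar (MvPolynomial (Fin v) F ⧸ degIdeal F v ℓ) ℂ,
          (ψ ε₀)⁻¹ *
            ∏ α ∈ Zᶜ, ∑ a : Fˣ,
              ψ (Ideal.Quotient.mk (degIdeal F v ℓ) (C (a : F) * Ppoly q v α)) := by
  subst hq
  have := finite_quot F v ℓ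
  have := Fintype.ofFinite (MvPolynomial (Fin v) F ⧸ degIdeal F v ℓ)
  rw [card_eq_card_combo, finsum_eq_sum_of_fintype]
  simp only [prod_sum_eq_sum_combo, Finset.mul_sum]
  rw [Finset.sum_comm]
  have key : ∀ h : {α // α ∈ Zᶜ} → Fˣ,
      ∑ ψ : AddChar (MvPolynomial (Fin v) F ⧸ degIdeal F v ℓ) ℂ,
        (Nat.card (MvPolynomial (Fin v) F ⧸ degIdeal F v ℓ) : ℂ)⁻¹ *
          ((ψ ε₀)⁻¹ * ψ (Ideal.Quotient.mk (degIdeal F v ℓ) (combo Z h))) =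
      if Ideal.Quotient.mk (degIdeal F v ℓ) (combo Z h) = ε₀ then 1 else 0 := by
    intro h
    rw [← Finset.mul_sum]
    simp only [← AddChar.map_neg_eq_inv, ← AddChar.map_add_eq_mul]
    rw [AddChar.sum_apply_eq_ite, Nat.card_eq_fintype_card, neg_add_eq_zero]
    by_cases hh : Ideal.Quotient.mk (degIdeal F v ℓ) (combo Z h) = ε₀
    · rw [if_pos hh, if_pos hh.symm, inv_mul_cancel₀]
      exact Nat.cast_ne_zero.2 Fintype.card_ne_zero
    · rw [if_neg hh, if_neg (Ne.symm hh), mul_zero]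
  rw [Finset.sum_congr rfl fun h _ => key h, Finset.sum_boole, Nat.card_eq_fintype_card,
    Fintype.card_subtype]
end

section
/- For every integer k with 0 ≤ k ≤ q−1, the number of polynomials f ∈ F_q[x] of degree at most q−1 with nonzero constant term that have exactly k roots in F_q equals C(q−1,k)·(q−1)^{q−k}. -/
/-!
By Lagrange interpolation, evaluation is a bijection from the polynomials of degree at most `q - 1`
onto all functions `F → F`; the constant term is the value at `0`. So the count is the number of
functions `g : F → F` with `g 0 ≠ 0` and exactly `k` zeros. The zero set of such a `g` is a
`k`-element subset of `F \ {0}`, with `C(q-1, k)` choices, and for a given zero set the remaining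
`q - k` values of `g` are arbitrary nonzero elements, giving `(q-1)^(q-k)` choices.
-/

open Classical in
/-- The number of functions with a prescribed zero set `S`. -/
lemma card_fun_zeroSet {F : Type} [Field F] [Fintype F] (S : Finset F) :
    (Finset.univ.filter fun g : F → F => Finset.univ.filter (fun x => g x = 0) = S).card =
      (Fintype.card F - 1) ^ (Fintype.card F - S.card) := by
  have h : (Finset.univ.filter fun g : F → F => Finset.univ.filter (fun x => g x = 0) = S) =
      Fintype.piFinset (fun x => if x ∈ S then ({0} : Finset F) else Finset.univ.erase 0) := by
    ext g
    simp only [Finset.mem_filter, Finset.mem_univ, true_and, Fintype.mem_piFinset,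
      Finset.ext_iff]
    refine forall_congr' fun x => ?_
    by_cases hx : x ∈ S <;> simp [hx]
  rw [h, Fintype.card_piFinset]
  have h2 : ∀ x : F, (if x ∈ S then ({0} : Finset F) else Finset.univ.erase 0).card =
      if x ∈ S then 1 else Fintype.card F - 1 := by
    intro x
    split_ifs <;> simp [Finset.card_erase_of_mem]
  simp only [h2]
  rw [Finset.prod_ite]
  simp only [Finset.prod_const_one, one_mul, Finset.prod_const]
  congr 1
  rw [← Finset.card_compl]
  congr 1
  ext x
  simp

open Classical in
/-- The count on the side of functions, obtained by sorting them by their zero set. -/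
lemma card_fun_zeros {F : Type} [Field F] [Fintype F] (k : ℕ) :
    (Finset.univ.filter fun g : F → F =>
        g 0 ≠ 0 ∧ (Finset.univ.filter (fun x => g x = 0)).card = k).card =
      (Fintype.card F - 1).choose k * (Fintype.card F - 1) ^ (Fintype.card F - k) := by
  rw [Finset.card_eq_sum_card_fiberwise
    (f := fun g : F → F => Finset.univ.filter (fun x => g x = 0))
    (t := Finset.powersetCard k (Finset.univ.erase 0))]
  · rw [Finset.sum_congr rfl
      (g := fun _ => (Fintype.card F - 1) ^ (Fintype.card F - k))]
    · simp [Finset.card_powersetCard, Finset.card_erase_of_mem]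
    · intro S hS
      rw [Finset.mem_powersetCard] at hS
      obtain ⟨hS0, hSk⟩ := hS
      rw [← hSk, ← card_fun_zeroSet S, Finset.filter_filter]
      congr 1
      ext g
      simp only [Finset.mem_filter, Finset.mem_univ, true_and]
      refine ⟨fun h => h.2, fun h => ⟨⟨fun h0 => ?_, by rw [h]⟩, h⟩⟩
      have : (0 : F) ∈ S := by rw [← h]; simp [h0]
      simpa using hS0 this
  · intro g hg
    simp only [Finset.coe_filter, Finset.mem_univ, true_and, Set.mem_ofPred_eq] at hg
    rw [Finset.mem_coe, Finset.mem_powersetCard]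
    refine ⟨fun x hx => ?_, hg.2⟩
    simp only [Finset.mem_filter, Finset.mem_univ, true_and] at hx
    simp only [Finset.mem_erase, Finset.mem_univ, and_true]
    rintro rfl
    exact hg.1 hx

/-- For `0 ≤ k ≤ q - 1`, the number of polynomials `f ∈ F_q[x]` of degree at most
`q - 1` with nonzero constant term having exactly `k` roots in `F_q` is
`C(q-1, k) · (q-1)^(q-k)`. -/
theorem stmt_6 {p : ℕ} [Fact p.Prime] {F : Type} [Field F] [Fintype F] [CharP F p]
    (q : ℕ) (hq : Fintype.card F = q) (k : ℕ) (hk : k ≤ q - 1) :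
    Nat.card {f : Polynomial F //
        f.natDegree ≤ q - 1 ∧ f.coeff 0 ≠ 0 ∧
        Nat.card {r : F // Polynomial.eval r f = 0} = k} =
      (q - 1).choose k * (q - 1) ^ (q - k) := by
  classical
  subst hq
  have hpos : 0 < Fintype.card F := Fintype.card_pos
  have hinj : Set.InjOn (id : F → F) (Finset.univ : Finset F) := Function.injective_id.injOn
  have hdeg : ∀ f : Polynomial F, f.natDegree ≤ Fintype.card F - 1 →
      f.degree < (Finset.univ : Finset F).card := by
    intro f hf
    rw [Finset.card_univ]
    refine lt_of_le_of_lt Polynomial.degree_le_natDegree ?_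
    exact_mod_cast (by omega : f.natDegree < Fintype.card F)
  have hroots : ∀ g : F → F, Nat.card {r : F // g r = 0} =
      (Finset.univ.filter (fun x => g x = 0)).card := by
    intro g
    rw [Nat.card_eq_fintype_card, Fintype.card_subtype]
  rw [← card_fun_zeros (F := F) k, ← Fintype.card_subtype]
  refine (Nat.card_congr (Equiv.ofBijective
    (fun f => ⟨fun x => Polynomial.eval x f.1,
      (Polynomial.coeff_zero_eq_eval_zero f.1).symm.trans_ne f.2.2.1,
      (hroots _).symm.trans f.2.2.2⟩) ⟨?_, ?_⟩)).trans Nat.card_eq_fintype_card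
  · rintro ⟨f, hf⟩ ⟨g, hg⟩ h
    have h' := congrArg Subtype.val h
    refine Subtype.ext (Polynomial.eq_of_degrees_lt_of_eval_finset_eq Finset.univ
      (hdeg f hf.1) (hdeg g hg.1) fun x _ => congrFun h' x)
  · rintro ⟨g, hg0, hgk⟩
    have he : ∀ x, Polynomial.eval x (Lagrange.interpolate Finset.univ id g) = g x := fun x =>
      Lagrange.eval_interpolate_at_node g hinj (Finset.mem_univ x)
    refine ⟨⟨Lagrange.interpolate Finset.univ id g, ?_, ?_, ?_⟩, ?_⟩
    · refine Polynomial.natDegree_le_of_degree_le ?_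
      simpa using Lagrange.degree_interpolate_le g hinj
    · rw [Polynomial.coeff_zero_eq_eval_zero, he]
      exact hg0
    · simp only [he]
      rw [hroots]
      exact hgk
    · exact Subtype.ext (funext he)
end

section
/- Let I be an ideal of R. Then the number of additive characters ψ of R with K_ψ = I equals (|R|/|I|)·c, where c = 1 if dim Soc(R/I) = 0, c = 1 − 1/q if dim Soc(R/I) = 1, and c = 0 if dim Soc(R/I) ≥ 2. -/
/-!
Put `A = R/I` and let `𝔪` be the ideal of `A` generated by the classes of the variables, so that
`A = F + 𝔪` with `𝔪` nilpotent. Characters of `R` with `K_ψ = I` are the pullbacks of the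
characters of `A` with `K_ψ = 0` (`natCard_charKer_eq`). As every nonzero ideal of `A` meets the
socle (`exists_mem_soc`) and `A` acts on the socle through scalars (`exists_mul_eq_smul`), `K_ψ = 0`
means that `ker ψ` contains no `F`-line of the socle (`nondeg_iff`).

If the socle is zero this is no condition, and `A` has `|A|` characters. If the socle is a line, the
condition is that `ψ` is nontrivial on it, which excludes the `|A|/q` characters of `A/Soc`
(`natCard_nontrivial_on_line`). In general such a `ψ` embeds the socle into the group of the `q`
characters of `F`, by `z ↦ (c ↦ ψ (c z))`, so that dimension at least two is impossible
(`finrank_le_one_of_nondeg`).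
-/

open MvPolynomial

attribute [local instance] Classical.propDecidable

/-- The socle `Soc(R/I) = {f ∈ R/I : x_l · f = 0 for all l}` as an `F`-subspace of
`R/I`, where `R = F[x_1,…,x_v]/⟨monomials of degree n⟩`. -/
noncomputable def socle (F : Type) [Field F] (v n : ℕ)
    (I : Ideal (MvPolynomial (Fin v) F ⧸ degIdeal F v n)) :
    Submodule F ((MvPolynomial (Fin v) F ⧸ degIdeal F v n) ⧸ I) :=
  ⨅ l : Fin v, LinearMap.ker (LinearMap.mulLeft F
    (Ideal.Quotient.mk I (Ideal.Quotient.mk (degIdeal F v n) (X l))))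

/-! ### Characters of finite abelian groups and surjections -/

/-- A character that is trivial on the kernel of a surjection `f` factors through `f`. -/
theorem exists_factor {G H : Type} [AddCommGroup G] [AddCommGroup H] (f : G →+ H)
    (hf : Function.Surjective f) (ψ : AddChar G ℂ) (h : ∀ s, f s = 0 → ψ s = 1) :
    ∃ φ : AddChar H ℂ, φ.compAddMonoidHom f = ψ := by
  have key : ∀ a b, f a = f b → ψ a = ψ b := by
    intro a b hab
    have h1 := h (a - b) (by rw [map_sub, hab, sub_self])
    have h2 := AddChar.map_add_eq_mul ψ (a - b) b
    rw [sub_add_cancel, h1, one_mul] at h2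
    exact h2
  have hs := Function.surjInv_eq hf
  refine ⟨⟨fun b => ψ (Function.surjInv hf b), ?_, ?_⟩, ?_⟩
  · exact h _ (hs 0)
  · intro a b
    rw [← AddChar.map_add_eq_mul]
    exact key _ _ (by rw [map_add, hs, hs, hs])
  · ext a
    exact key _ _ (hs _)

theorem natCard_addChar (G : Type) [AddCommGroup G] [Finite G] :
    Nat.card (AddChar G ℂ) = Nat.card G := by
  have := Fintype.ofFinite G
  rw [Nat.card_eq_fintype_card, Nat.card_eq_fintype_card, AddChar.card_eq]

theorem natCard_addChar_trivial_on {G H : Type} [AddCommGroup G] [AddCommGroup H] [Finite H]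
    (f : G →+ H) (hf : Function.Surjective f) :
    Nat.card {ψ : AddChar G ℂ // ∀ s, f s = 0 → ψ s = 1} = Nat.card H := by
  rw [← natCard_addChar H]
  symm
  refine Nat.card_congr (Equiv.ofBijective
    (fun φ => ⟨φ.compAddMonoidHom f, fun s hs => by simp [hs]⟩) ⟨?_, ?_⟩)
  · intro φ₁ φ₂ h
    exact AddChar.compAddMonoidHom_injective_left f hf (congrArg Subtype.val h)
  · rintro ⟨ψ, hψ⟩
    obtain ⟨φ, rfl⟩ := exists_factor f hf ψ hψ
    exact ⟨φ, rfl⟩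

/-! ### The socle of a finite algebra generated by nilpotents -/

section NilGenerated

variable {F A ι : Type} [Field F] [CommRing A] [Algebra F A]

/-- The elements of `A` annihilated by every `y l`; for `A = R/I` and `y` the classes of the
variables this is the socle. -/
noncomputable def soc (F : Type) {A ι : Type} [Field F] [CommRing A] [Algebra F A]
    (y : ι → A) : Submodule F A :=
  ⨅ l, LinearMap.ker (LinearMap.mulLeft F (y l))

theorem mem_soc {y : ι → A} {z : A} : z ∈ soc F y ↔ ∀ l, y l * z = 0 := by
  simp [soc]

/-- If `𝔪 ^ k * J` is the last nonzero ideal in the chain `J ⊇ 𝔪 * J ⊇ 𝔪 ^ 2 * J ⊇ ⋯`, where `𝔪`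
is generated by the `y l`, then its elements lie in the socle. -/
theorem exists_mem_soc [Finite A] (y : ι → A) (hy : ∀ l, IsNilpotent (y l))
    (J : Ideal A) (hJ : J ≠ ⊥) : ∃ z ∈ J, z ≠ 0 ∧ z ∈ soc F y := by
  set m : Ideal A := Ideal.span (Set.range y)
  have hm : IsNilpotent m := by
    rw [Ideal.FG.isNilpotent_iff_le_nilradical (IsNoetherian.noetherian _), Ideal.span_le]
    rintro _ ⟨l, rfl⟩
    exact hy l
  obtain ⟨N, hN⟩ := hm
  have hex : ∃ k, m ^ k * J = ⊥ := ⟨N, by rw [hN]; simp⟩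
  have hk := Nat.find_spec hex
  have hmin := fun j => Nat.find_min hex (m := j)
  rcases hk0 : Nat.find hex with _ | k
  · rw [hk0] at hk
    simp at hk
    exact absurd hk hJ
  · rw [hk0] at hk
    obtain ⟨z, hz, hz0⟩ := Submodule.exists_mem_ne_zero_of_ne_bot (hmin k (by omega))
    refine ⟨z, (Ideal.mul_le_right : m ^ k * J ≤ J) hz, hz0, mem_soc.2 fun l => ?_⟩
    have hyl : y l ∈ m := Ideal.subset_span (Set.mem_range_self l)
    have hmul : y l * z ∈ m * (m ^ k * J) := Ideal.mul_mem_mul hyl hz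
    rwa [← mul_assoc, ← pow_succ', hk, Ideal.mem_bot] at hmul

/-- Since `A = F + 𝔪` and `𝔪` kills the socle, `A` acts on the socle through scalars. -/
theorem exists_mul_eq_smul (y : ι → A)
    (hgen : ∀ a : A, ∃ c : F, a - algebraMap F A c ∈ Ideal.span (Set.range y))
    {z : A} (hz : z ∈ soc F y) (a : A) : ∃ c : F, z * a = c • z := by
  obtain ⟨c, hc⟩ := hgen a
  refine ⟨c, ?_⟩
  have hle : Ideal.span (Set.range y) ≤ LinearMap.ker (LinearMap.toSpanSingleton A A z) := by
    rw [Ideal.span_le]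
    rintro _ ⟨l, rfl⟩
    simpa using mem_soc.1 hz l
  have := hle hc
  simp only [LinearMap.mem_ker, LinearMap.toSpanSingleton_apply, smul_eq_mul, sub_mul,
    sub_eq_zero] at this
  rw [mul_comm, this, Algebra.smul_def]

/-- The ideal `{c | ∀ r, ψ (c * r) = 1}` attached to a character `ψ`. -/
def charKer (ψ : AddChar A ℂ) : Ideal A where
  carrier := {c | ∀ r, ψ (c * r) = 1}
  zero_mem' := by simp
  add_mem' := by
    intro a b ha hb r
    rw [add_mul, AddChar.map_add_eq_mul, ha, hb, one_mul]
  smul_mem' := by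
    intro a b hb r
    rw [smul_eq_mul, mul_comm a, mul_assoc]
    exact hb _

/-- `ψ` has zero kernel ideal exactly when no line of the socle lies in its kernel, because every
nonzero ideal meets the socle. -/
theorem nondeg_iff [Finite A] (y : ι → A) (hy : ∀ l, IsNilpotent (y l))
    (hgen : ∀ a : A, ∃ c : F, a - algebraMap F A c ∈ Ideal.span (Set.range y))
    (ψ : AddChar A ℂ) :
    (∀ c, (∀ r, ψ (c * r) = 1) → c = 0) ↔
      ∀ z ∈ soc F y, (∀ c : F, ψ (c • z) = 1) → z = 0 := by
  constructor
  · intro h z hz hc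
    refine h z fun r => ?_
    obtain ⟨c, hcr⟩ := exists_mul_eq_smul y hgen hz r
    rw [hcr, hc]
  · intro h
    by_contra hcon
    have hJ : charKer ψ ≠ ⊥ := fun hb => hcon fun c hc => by
      have : c ∈ charKer ψ := hc
      rwa [hb, Ideal.mem_bot] at this
    obtain ⟨z, hzJ, hz0, hz⟩ := exists_mem_soc (F := F) y hy _ hJ
    refine hz0 (h z hz fun c => ?_)
    rw [Algebra.smul_def, mul_comm]
    exact hzJ _

/-- If no line of `S` lies in the kernel of `ψ`, then `z ↦ (c ↦ ψ (c • z))` embeds `S` into the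
character group of `F`, which has only `|F|` elements. -/
theorem finrank_le_one_of_nondeg [Finite F] [Finite A] (S : Submodule F A) (ψ : AddChar A ℂ)
    (h : ∀ z ∈ S, (∀ c : F, ψ (c • z) = 1) → z = 0) : Module.finrank F S ≤ 1 := by
  have := Fintype.ofFinite F
  have := Fintype.ofFinite S
  let T : S → AddChar F ℂ := fun z =>
    ψ.compAddMonoidHom (LinearMap.toSpanSingleton F A (z : A)).toAddMonoidHom
  have hT : Function.Injective T := by
    intro a b hab
    have h0 : ((a - b : S) : A) = 0 := by
      refine h _ (a - b).2 fun c => ?_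
      have h1 : ψ (c • (a : A)) = ψ (c • (b : A)) := by
        simpa [T] using DFunLike.congr_fun hab c
      rw [Submodule.coe_sub, smul_sub, AddChar.map_sub_eq_div, h1, div_self]
      intro h2
      have h3 := AddChar.map_add_eq_mul ψ (c • (b : A)) (-(c • (b : A)))
      rw [add_neg_cancel, AddChar.map_zero_eq_one, h2, zero_mul] at h3
      exact one_ne_zero h3
    exact sub_eq_zero.1 (Subtype.ext h0)
  have hle := Nat.card_le_card_of_injective T hT
  rw [natCard_addChar, Nat.card_eq_fintype_card, Nat.card_eq_fintype_card,
    Module.card_eq_pow_finrank (K := F) (V := S)] at hle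
  by_contra hcon
  have := Nat.pow_lt_pow_right (Fintype.one_lt_card (α := F)) (not_le.1 hcon)
  rw [pow_one] at this
  omega

/-- When `S` is a line, a character has no line of `S` in its kernel iff it is nontrivial on `S`;
the characters trivial on `S` are those of `A ⧸ S`. -/
theorem natCard_nontrivial_on_line [Finite F] [Finite A] (S : Submodule F A)
    (hS : Module.finrank F S = 1) :
    (Nat.card {ψ : AddChar A ℂ // ∀ z ∈ S, (∀ c : F, ψ (c • z) = 1) → z = 0} : ℝ) =
      Nat.card A * (1 - 1 / (Nat.card F : ℝ)) := by
  have := Fintype.ofFinite F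
  have := Fintype.ofFinite S
  have hiff : ∀ ψ : AddChar A ℂ, (∀ z ∈ S, (∀ c : F, ψ (c • z) = 1) → z = 0) ↔
      ¬ ∀ s, S.mkQ.toAddMonoidHom s = 0 → ψ s = 1 := by
    intro ψ
    have hker : ∀ s, S.mkQ.toAddMonoidHom s = 0 ↔ s ∈ S := fun s => by simp
    simp only [hker]
    constructor
    · intro h htriv
      have hbot : S = ⊥ := (Submodule.eq_bot_iff _).2 fun z hz =>
        h z hz fun c => htriv _ (S.smul_mem c hz)
      rw [hbot, finrank_bot] at hS
      exact zero_ne_one hS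
    · intro h z hz hc
      by_contra hz0
      refine h fun s hs => ?_
      obtain ⟨c, hcs⟩ := (finrank_eq_one_iff_of_nonzero' (⟨z, hz⟩ : S)
        (fun h0 => hz0 (congrArg Subtype.val h0))).1 hS ⟨s, hs⟩
      rw [← show c • z = s from congrArg Subtype.val hcs, hc]
  have : Finite (A ⧸ S) := Finite.of_surjective _ S.mkQ_surjective
  have hquot : Nat.card {ψ : AddChar A ℂ // ∀ s, S.mkQ.toAddMonoidHom s = 0 → ψ s = 1} =
      Nat.card (A ⧸ S) := natCard_addChar_trivial_on _ S.mkQ_surjective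
  have hA := S.card_eq_card_quotient_mul_card
  have hSF : Nat.card S = Nat.card F := by
    rw [Nat.card_eq_fintype_card, Nat.card_eq_fintype_card,
      Module.card_eq_pow_finrank (K := F) (V := S), hS, pow_one]
  have hsplit : Nat.card {ψ : AddChar A ℂ // ∀ s, S.mkQ.toAddMonoidHom s = 0 → ψ s = 1} +
      Nat.card {ψ : AddChar A ℂ // ¬ ∀ s, S.mkQ.toAddMonoidHom s = 0 → ψ s = 1} = Nat.card A := by
    rw [← natCard_addChar A, ← Nat.card_sum]
    exact Nat.card_congr (Equiv.sumCompl _)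
  rw [Nat.card_congr (Equiv.subtypeEquivRight hiff)]
  rw [hquot] at hsplit
  rw [hSF] at hA
  have hq : (Nat.card F : ℝ) ≠ 0 := by exact_mod_cast Nat.card_pos.ne'
  have h1 : (Nat.card (A ⧸ S) : ℝ) + Nat.card
      {ψ : AddChar A ℂ // ¬ ∀ s, S.mkQ.toAddMonoidHom s = 0 → ψ s = 1} = Nat.card A := by
    exact_mod_cast hsplit
  have h2 : (Nat.card A : ℝ) = Nat.card F * Nat.card (A ⧸ S) := by exact_mod_cast hA
  field_simp
  linear_combination (Nat.card F : ℝ) * h1 + h2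

/-- The count for the zero ideal of a finite algebra `A = F + 𝔪`, with `𝔪` generated by
nilpotent elements `y l`. -/
theorem natCard_nondeg [Finite F] [Finite A] (y : ι → A) (hy : ∀ l, IsNilpotent (y l))
    (hgen : ∀ a : A, ∃ c : F, a - algebraMap F A c ∈ Ideal.span (Set.range y)) :
    (Nat.card {ψ : AddChar A ℂ // ∀ c, (∀ r, ψ (c * r) = 1) → c = 0} : ℝ) =
      Nat.card A * (if Module.finrank F (soc F y) = 0 then 1
          else if Module.finrank F (soc F y) = 1 then 1 - 1 / (Nat.card F : ℝ) else 0) := by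
  rw [Nat.card_congr (Equiv.subtypeEquivRight (nondeg_iff y hy hgen))]
  split_ifs with h0 h1
  · have : Module.Finite F A := Module.Finite.of_finite
    have hbot : soc F y = ⊥ := Submodule.finrank_eq_zero.1 h0
    rw [mul_one, ← natCard_addChar A, Nat.card_congr (Equiv.subtypeUnivEquiv fun ψ z hz _ => ?_)]
    rwa [hbot, Submodule.mem_bot] at hz
  · exact natCard_nontrivial_on_line _ h1
  · have : IsEmpty {ψ : AddChar A ℂ // ∀ z ∈ soc F y, (∀ c : F, ψ (c • z) = 1) → z = 0} :=
      ⟨fun ψ => by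
        have := finrank_le_one_of_nondeg _ ψ.1 ψ.2
        omega⟩
    simp

/-- Elements of `F + 𝔪` with `𝔪` nil are integral over `F`, so a finitely generated such algebra
is finite. -/
theorem finite_of_nilpotent_gens [Finite F] [Algebra.FiniteType F A] (y : ι → A)
    (hy : ∀ l, IsNilpotent (y l))
    (hgen : ∀ a : A, ∃ c : F, a - algebraMap F A c ∈ Ideal.span (Set.range y)) : Finite A := by
  have hint : Algebra.IsIntegral F A := ⟨fun a => by
    obtain ⟨c, hc⟩ := hgen a
    have hle : Ideal.span (Set.range y) ≤ nilradical A := by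
      rw [Ideal.span_le]
      rintro _ ⟨l, rfl⟩
      exact hy l
    obtain ⟨N, hN⟩ := hle hc
    have h1 : IsIntegral F (a - algebraMap F A c) :=
      ⟨Polynomial.X ^ N, Polynomial.monic_X_pow N, by simpa using hN⟩
    simpa using h1.add (isIntegral_algebraMap (x := c))⟩
  have : Module.Finite F A := Algebra.IsIntegral.finite
  exact Module.finite_of_finite F

end NilGenerated

/-! ### Truncated polynomial rings and their quotients -/

theorem sub_C_mem_span_X {F : Type} [Field F] {v : ℕ} (a : MvPolynomial (Fin v) F) :
    ∃ c : F, a - C c ∈ Ideal.span (Set.range (X : Fin v → MvPolynomial (Fin v) F)) := by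
  induction a using MvPolynomial.induction_on with
  | C c => exact ⟨c, by simp⟩
  | add p q hp hq =>
    obtain ⟨c, hc⟩ := hp
    obtain ⟨d, hd⟩ := hq
    refine ⟨c + d, ?_⟩
    convert Ideal.add_mem _ hc hd using 1
    rw [C_add]
    ring
  | mul_X p l _ =>
    refine ⟨0, ?_⟩
    rw [C_0, sub_zero]
    exact Ideal.mul_mem_left _ _ (Ideal.subset_span (Set.mem_range_self l))

theorem X_pow_mem_degIdeal (F : Type) [Field F] (v n : ℕ) (l : Fin v) :
    (X l : MvPolynomial (Fin v) F) ^ n ∈ degIdeal F v n := by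
  refine Ideal.subset_span ⟨Pi.single l n, by simp, ?_⟩
  rw [Finset.prod_eq_single l]
  · simp
  · intro j _ hj
    simp [Pi.single_eq_of_ne hj]
  · simp

/-- A surjection carries a decomposition `F + 𝔪` of its source to one of its target. -/
theorem gens_of_surjective {F A B ι : Type} [Field F] [CommRing A] [CommRing B] [Algebra F A]
    [Algebra F B] (f : A →ₐ[F] B) (hf : Function.Surjective f) (y : ι → A)
    (hgen : ∀ a : A, ∃ c : F, a - algebraMap F A c ∈ Ideal.span (Set.range y)) (b : B) :
    ∃ c : F, b - algebraMap F B c ∈ Ideal.span (Set.range fun l => f (y l)) := by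
  obtain ⟨a, rfl⟩ := hf b
  obtain ⟨c, hc⟩ := hgen a
  refine ⟨c, ?_⟩
  have := Ideal.mem_map_of_mem f hc
  rwa [Ideal.map_span, ← Set.range_comp, map_sub, AlgHom.commutes] at this

/-- Characters of `R` with kernel ideal `I` are the pullbacks of the characters of `R ⧸ I` with
zero kernel ideal. -/
theorem natCard_charKer_eq {R : Type} [CommRing R] (I : Ideal R) :
    Nat.card {ψ : AddChar R ℂ // {c : R | ∀ r : R, ψ (c * r) = 1} = (I : Set R)} =
      Nat.card {φ : AddChar (R ⧸ I) ℂ // ∀ c, (∀ r, φ (c * r) = 1) → c = 0} := by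
  symm
  have hsurj : Function.Surjective (Ideal.Quotient.mk I).toAddMonoidHom :=
    Ideal.Quotient.mk_surjective
  refine Nat.card_congr (Equiv.ofBijective
    (fun φ => ⟨φ.1.compAddMonoidHom (Ideal.Quotient.mk I).toAddMonoidHom, ?_⟩) ⟨?_, ?_⟩)
  · ext c
    simp only [Set.mem_ofPred_eq, SetLike.mem_coe, AddChar.compAddMonoidHom_apply,
      RingHom.toAddMonoidHom_eq_coe, AddMonoidHom.coe_coe, map_mul]
    rw [← Ideal.Quotient.eq_zero_iff_mem]
    constructor
    · intro h
      refine φ.2 _ fun r => ?_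
      obtain ⟨r, rfl⟩ := Ideal.Quotient.mk_surjective r
      exact h r
    · intro h r
      rw [h, zero_mul, AddChar.map_zero_eq_one]
  · intro φ₁ φ₂ h
    exact Subtype.ext (AddChar.compAddMonoidHom_injective_left _ hsurj (congrArg Subtype.val h))
  · rintro ⟨ψ, hψ⟩
    have hmem : ∀ c, (∀ r, ψ (c * r) = 1) ↔ c ∈ I := fun c => Set.ext_iff.1 hψ c
    obtain ⟨φ, rfl⟩ := exists_factor _ hsurj ψ fun s hs => by
      have := (hmem s).2 (Ideal.Quotient.eq_zero_iff_mem.1 hs) 1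
      rwa [mul_one] at this
    refine ⟨⟨φ, fun c hc => ?_⟩, rfl⟩
    obtain ⟨c, rfl⟩ := Ideal.Quotient.mk_surjective c
    rw [Ideal.Quotient.eq_zero_iff_mem, ← hmem]
    intro r
    simpa using hc (Ideal.Quotient.mk I r)

/-- The count for an ideal `I` of a finitely generated algebra `R = F + 𝔪`, with `𝔪` generated by
nilpotent elements `y l`. -/
theorem natCard_charKer_eq_mul {F R ι : Type} [Field F] [Finite F] [CommRing R] [Algebra F R]
    [Algebra.FiniteType F R] (y : ι → R) (hy : ∀ l, IsNilpotent (y l))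
    (hgen : ∀ a : R, ∃ c : F, a - algebraMap F R c ∈ Ideal.span (Set.range y)) (I : Ideal R) :
    (Nat.card {ψ : AddChar R ℂ // {c : R | ∀ r : R, ψ (c * r) = 1} = (I : Set R)} : ℝ) =
      ((Nat.card R : ℝ) / (Nat.card I : ℝ)) *
        (if Module.finrank F (soc F fun l => Ideal.Quotient.mk I (y l)) = 0 then 1
          else if Module.finrank F (soc F fun l => Ideal.Quotient.mk I (y l)) = 1 then
            1 - 1 / (Nat.card F : ℝ)
          else 0) := by
  have hfin : Finite R := finite_of_nilpotent_gens y hy hgen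
  have hfinA : Finite (R ⧸ I) := Finite.of_surjective _ Ideal.Quotient.mk_surjective
  have hI : (Nat.card I : ℝ) ≠ 0 := by exact_mod_cast Nat.card_pos.ne'
  have hcard : (Nat.card (R ⧸ I) : ℝ) = (Nat.card R : ℝ) / (Nat.card I : ℝ) := by
    rw [eq_div_iff hI, mul_comm]
    exact_mod_cast (Submodule.card_eq_card_quotient_mul_card I).symm
  rw [natCard_charKer_eq, ← hcard]
  exact natCard_nondeg _ (fun l => (hy l).map _)
    (gens_of_surjective (Ideal.Quotient.mkₐ F I) Ideal.Quotient.mk_surjective y hgen)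

/-- The number of additive characters `ψ` of `R` with `K_ψ = I` equals `(|R|/|I|) · c`,
where `c = 1` if `dim Soc(R/I) = 0`, `c = 1 - 1/q` if `dim Soc(R/I) = 1`, and `c = 0`
otherwise. -/
theorem stmt_10 {p : ℕ} [Fact p.Prime] {F : Type} [Field F] [Fintype F] [CharP F p]
    (q : ℕ) (hq : Fintype.card F = q) (v : ℕ) (hv : 1 ≤ v) (n : ℕ) (hn : 1 ≤ n)
    (I : Ideal (MvPolynomial (Fin v) F ⧸ degIdeal F v n)) :
    (Nat.card {ψ : AddChar (MvPolynomial (Fin v) F ⧸ degIdeal F v n) ℂ //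
        {c : MvPolynomial (Fin v) F ⧸ degIdeal F v n |
          ∀ r : MvPolynomial (Fin v) F ⧸ degIdeal F v n, ψ (c * r) = 1} =
          (I : Set (MvPolynomial (Fin v) F ⧸ degIdeal F v n))} : ℝ) =
      ((Nat.card (MvPolynomial (Fin v) F ⧸ degIdeal F v n) : ℝ) / (Nat.card I : ℝ)) *
        (if Module.finrank F (socle F v n I) = 0 then 1
          else if Module.finrank F (socle F v n I) = 1 then 1 - 1 / (q : ℝ)
          else 0) := by
  have hgenR : ∀ a : MvPolynomial (Fin v) F ⧸ degIdeal F v n, ∃ c : F,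
      a - algebraMap F _ c ∈
        Ideal.span (Set.range fun l : Fin v => Ideal.Quotient.mk (degIdeal F v n) (X l)) :=
    gens_of_surjective (Ideal.Quotient.mkₐ F (degIdeal F v n))
      Ideal.Quotient.mk_surjective X sub_C_mem_span_X
  have hnilR : ∀ l : Fin v, IsNilpotent (Ideal.Quotient.mk (degIdeal F v n) (X l)) := fun l =>
    ⟨n, by rw [← map_pow, Ideal.Quotient.eq_zero_iff_mem]; exact X_pow_mem_degIdeal F v n l⟩
  have : Algebra.FiniteType F (MvPolynomial (Fin v) F ⧸ degIdeal F v n) :=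
    Algebra.FiniteType.of_surjective (Ideal.Quotient.mkₐ F (degIdeal F v n))
      Ideal.Quotient.mk_surjective
  rw [← hq, ← Nat.card_eq_fintype_card (α := F)]
  exact natCard_charKer_eq_mul _ hnilR hgenR I
end

section
/- Let G be a finite abelian group, let G_1,…,G_n and H be subgroups of G, let K := ⋂_{i=1}^n G_i, and let χ be a character on G. Then the number of n-tuples (χ_1,…,χ_n) of characters on G such that χ_i(g) = 1 for all g ∈ G_i and all 1 ≤ i ≤ n, and (∏_{i=1}^n χ_i)(h) = χ(h) for all h ∈ H, equals (|H∩K|/|H|)·∏_{i=1}^n (|G|/|G_i|) if χ(h) = 1 for all h ∈ H∩K, and equals 0 otherwise. -/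
/-! Write `Ĝ` for the dual group and `Aᵢ ≤ Ĝ` for the annihilator of `Gᵢ`. The tuples being
counted form the fibre over `χ|_H` of the homomorphism `∏ᵢ Aᵢ → Ĥ`, `t ↦ (∏ᵢ tᵢ)|_H`. An element
of `H` is killed by the whole range of this homomorphism iff it is killed by every `Aᵢ`, iff it
lies in every `Gᵢ`; so by duality on `H` the range is the annihilator of `H ∩ K` in `Ĥ`
(`range_annProd`), of order `|H| / |H ∩ K|`. Hence the fibre is empty unless `χ` is trivial on
`H ∩ K`, and otherwise it has the size of the kernel, `∏ᵢ |Aᵢ| / (|H| / |H ∩ K|)`, where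
`|Aᵢ| = |G| / |Gᵢ|`. Since `G` is a group, `ℂ`-valued characters are the same as `ℂˣ`-valued
ones, for which Mathlib's duality theory is developed. -/

namespace CharacterCount

open CommGroup

/-- `ℂ` has all the roots of unity needed for the duality theory of a finite group. -/
lemma hasEnough (G : Type) [Group G] [Finite G] :
    HasEnoughRootsOfUnity ℂ (Monoid.exponent G) := by
  have : NeZero (Monoid.exponent G) := ⟨Monoid.exponent_ne_zero_of_finite⟩
  infer_instance

variable {G : Type} [CommGroup G]

/-- The annihilator of `H` in the dual group of `G`: the characters trivial on `H`. -/
abbrev ann (H : Subgroup G) : Subgroup (G →* ℂˣ) := (MonoidHom.domRestrictHom H ℂˣ).ker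

lemma mem_ann {H : Subgroup G} {φ : G →* ℂˣ} : φ ∈ ann H ↔ ∀ g ∈ H, φ g = 1 := by
  rw [MonoidHom.mem_ker, MonoidHom.domRestrictHom_apply, MonoidHom.domRestrict_eq_one_iff]

lemma card_ann [Finite G] (H : Subgroup G) : Nat.card (ann H) = H.index :=
  have := hasEnough G
  card_domRestrictHom_ker ℂ H

/-- A subgroup of the dual group is the annihilator of the subgroup on which all of its
characters are trivial. -/
lemma eq_ann_of_forall [Finite G] (R : Subgroup (G →* ℂˣ)) (L : Subgroup G)
    (h : ∀ g, (∀ φ ∈ R, φ g = 1) ↔ g ∈ L) : R = ann L := by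
  have := hasEnough G
  have hL : (subgroupOrderIsoSubgroupMonoidHom G ℂ).symm (OrderDual.toDual R) = L := by
    ext g
    rw [mem_subgroupOrderIsoSubgroupMonoidHom_symm_iff, h]
  ext φ
  rw [mem_ann, ← mem_subgroupOrderIsoSubgroupMonoidHom_iff ℂ, ← hL, OrderIso.apply_symm_apply,
    OrderDual.ofDual_toDual]

variable {n : ℕ} (Gs : Fin n → Subgroup G) (H : Subgroup G)

/-- The homomorphism sending a tuple of characters `tᵢ`, with `tᵢ` trivial on `Gs i`, to the
restriction to `H` of their product. -/
def annProd : (∀ i, ann (Gs i)) →* (H →* ℂˣ) where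
  toFun t := MonoidHom.domRestrictHom H ℂˣ (∏ i, (t i : G →* ℂˣ))
  map_one' := by simp
  map_mul' s t := by
    simp only [Pi.mul_apply, Subgroup.coe_mul, Finset.prod_mul_distrib, map_mul]

lemma annProd_apply (t : ∀ i, ann (Gs i)) (h : H) :
    annProd Gs H t h = ∏ i, (t i : G →* ℂˣ) h := by
  simp [annProd]

lemma range_annProd [Finite G] :
    (annProd Gs H).range = ann ((⨅ i, Gs i).subgroupOf H) := by
  have := hasEnough G
  refine eq_ann_of_forall _ _ fun h => ?_
  rw [Subgroup.mem_subgroupOf, Subgroup.mem_iInf]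
  constructor
  · intro hR i
    rw [← forall_monoidHom_apply_eq_one_iff ℂ]
    intro φ hφ
    -- Test against the tuple with the single nontrivial entry `φ` in position `i`.
    have key := hR _ ⟨Pi.mulSingle i ⟨φ, mem_ann.2 hφ⟩, rfl⟩
    rw [annProd_apply, Finset.prod_eq_single i] at key
    · simpa using key
    · intro j _ hj
      simp [Pi.mulSingle_eq_of_ne hj]
    · simp
  · rintro hK _ ⟨t, rfl⟩
    rw [annProd_apply]
    exact Finset.prod_eq_one fun i _ => mem_ann.1 (t i).2 _ (hK i)

lemma card_ker_annProd [Finite G] :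
    Nat.card (annProd Gs H).ker * ((⨅ i, Gs i).subgroupOf H).index = ∏ i, (Gs i).index := by
  rw [← card_ann, ← range_annProd, ← Subgroup.index_ker, Subgroup.card_mul_index, Nat.card_pi]
  exact Finset.prod_congr rfl fun i _ => card_ann _

/-- The `ℂ`-valued tuples to be counted correspond to a fibre of `annProd`. -/
lemma card_tuples (χ : G →* ℂ) :
    Nat.card {t : Fin n → (G →* ℂ) //
        (∀ i : Fin n, ∀ g ∈ Gs i, t i g = 1) ∧
        (∀ h ∈ H, (∏ i : Fin n, t i) h = χ h)} =
      Nat.card (annProd Gs H ⁻¹' {MonoidHom.domRestrictHom H ℂˣ χ.toHomUnits}) := by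
  symm
  refine Nat.card_eq_of_bijective
    (fun t => ⟨fun i => (Units.coeHom ℂ).comp (t.1 i : G →* ℂˣ), fun i g hg => ?_, ?_⟩) ⟨?_, ?_⟩
  · simp [mem_ann.1 (t.1 i).2 g hg]
  · intro h hh
    have := congrArg Units.val (DFunLike.congr_fun t.2 ⟨h, hh⟩)
    rw [annProd_apply] at this
    simpa [MonoidHom.finsetProd_apply] using this
  · intro s t hst
    ext i g
    simpa using DFunLike.congr_fun (congrFun (congrArg Subtype.val hst) i) g
  · rintro ⟨t, ht, hχ⟩
    refine ⟨⟨fun i => ⟨(t i).toHomUnits, mem_ann.2 fun g hg => ?_⟩, ?_⟩, ?_⟩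
    · ext
      simpa using ht i g hg
    · rw [Set.mem_preimage, Set.mem_singleton_iff]
      ext h
      rw [annProd_apply]
      simpa [MonoidHom.finsetProd_apply] using hχ h h.2
    · ext i g
      simp

lemma restrict_mem_range_annProd_iff [Finite G] (χ : G →* ℂ) :
    MonoidHom.domRestrictHom H ℂˣ χ.toHomUnits ∈ (annProd Gs H).range ↔
      ∀ h ∈ H ⊓ (⨅ i, Gs i), χ h = 1 := by
  rw [range_annProd, mem_ann]
  constructor
  · rintro hχ h ⟨hH, hK⟩
    simpa using congrArg Units.val (hχ ⟨h, hH⟩ hK)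
  · intro hχ h hK
    ext
    simpa using hχ h ⟨h.2, hK⟩

end CharacterCount

attribute [local instance] Classical.propDecidable

/-- Counting tuples of characters on a finite abelian group `G` that are trivial on
prescribed subgroups `G_1, …, G_n` and whose product agrees with a fixed character `χ`
on a subgroup `H`: the count is `(|H ∩ K| / |H|) · ∏ i (|G| / |G_i|)` if `χ` is trivial
on `H ∩ K` (where `K = ⋂ G_i`), and `0` otherwise. -/
theorem stmt_11 (G : Type) [CommGroup G] [Fintype G] (n : ℕ)
    (Gs : Fin n → Subgroup G) (H : Subgroup G) (χ : G →* ℂ) :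
    (Nat.card {t : Fin n → (G →* ℂ) //
        (∀ i : Fin n, ∀ g ∈ Gs i, t i g = 1) ∧
        (∀ h ∈ H, (∏ i : Fin n, t i) h = χ h)} : ℝ) =
      if ∀ h ∈ H ⊓ (⨅ i : Fin n, Gs i), χ h = 1 then
        ((Nat.card (H ⊓ (⨅ i : Fin n, Gs i) : Subgroup G) : ℝ) / (Nat.card H : ℝ)) *
          ∏ i : Fin n, ((Fintype.card G : ℝ) / (Nat.card (Gs i) : ℝ))
      else 0 := by
  rw [CharacterCount.card_tuples]
  have hmem := CharacterCount.restrict_mem_range_annProd_iff Gs H χ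
  split_ifs with hχ
  · obtain ⟨t, ht⟩ := hmem.2 hχ
    rw [← ht, Nat.card_congr ((CharacterCount.annProd Gs H).fiberEquivKer t)]
    have hker := CharacterCount.card_ker_annProd Gs H
    have hHK : Nat.card (H ⊓ (⨅ i, Gs i) : Subgroup G) * ((⨅ i, Gs i).subgroupOf H).index =
        Nat.card H := by
      rw [← Subgroup.card_mul_index ((⨅ i, Gs i).subgroupOf H), inf_comm,
        ← Subgroup.subgroupOf_map_subtype,
        Subgroup.card_map_of_injective H.subtype_injective]
    have hidx : ∀ i, (Fintype.card G : ℝ) / Nat.card (Gs i) = (Gs i).index := fun i => by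
      rw [← Nat.card_eq_fintype_card, ← Subgroup.card_mul_index (Gs i), Nat.cast_mul,
        mul_div_cancel_left₀ _ (Nat.cast_ne_zero.2 Nat.card_pos.ne')]
    simp_rw [hidx]
    rw [← Nat.cast_prod, ← hker, ← hHK]
    have h1 : (Nat.card (H ⊓ (⨅ i, Gs i) : Subgroup G) : ℝ) ≠ 0 :=
      Nat.cast_ne_zero.2 Nat.card_pos.ne'
    have h2 : (((⨅ i, Gs i).subgroupOf H).index : ℝ) ≠ 0 :=
      Nat.cast_ne_zero.2 Subgroup.FiniteIndex.index_ne_zero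
    push_cast
    field_simp
  · have : CharacterCount.annProd Gs H ⁻¹' {MonoidHom.domRestrictHom H ℂˣ χ.toHomUnits} = ∅ :=
      Set.eq_empty_of_forall_notMem fun t ht => hχ (hmem.1 ⟨t, ht⟩)
    rw [this, Nat.card_of_isEmpty, Nat.cast_zero]
end

section
/- Let n ≥ 1, let a ∈ F_q^*, and let 1 ≤ l ≤ v. Then 1 + a·x_l is a unit of R, and its multiplicative order in the unit group of R equals p^{⌈log_p(n)⌉}. -/
/-!
Write `y = a x_l`. In characteristic `p` the Frobenius gives `(1 + y) ^ p ^ k = 1 + y ^ p ^ k`,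
and `y ^ m` vanishes in the quotient exactly when `n ≤ m` (`pow_mem_degIdeal_iff`). Hence
`(1 + y) ^ p ^ k = 1` iff `n ≤ p ^ k` iff `Nat.clog p n ≤ k`, so the order, being a power of `p`,
is `p ^ Nat.clog p n`; and `1 + y` is a unit because `y` is nilpotent.
-/

open MvPolynomial

/-- Sending every variable to the single variable `X` of `F[X]` maps `degIdeal F v n` into
`⟨X ^ n⟩`, which detects that the lower powers of `a x_l` are nonzero in the quotient. -/
theorem pow_mem_degIdeal_iff {F : Type} [Field F] {v n : ℕ} {a : F} (ha : a ≠ 0) (l : Fin v)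
    (m : ℕ) : (C a * X l : MvPolynomial (Fin v) F) ^ m ∈ degIdeal F v n ↔ n ≤ m := by
  constructor
  · intro h
    have hle : degIdeal F v n ≤ (Ideal.span {(Polynomial.X : Polynomial F) ^ n}).comap
        (aeval (fun _ : Fin v => (Polynomial.X : Polynomial F))) := by
      refine Ideal.span_le.2 ?_
      rintro _ ⟨i, hi, rfl⟩
      simp [Finset.prod_pow_eq_pow_sum, hi]
    have h1 := hle h
    rw [Ideal.mem_comap, Ideal.mem_span_singleton, Polynomial.X_pow_dvd_iff] at h1
    by_contra hlt
    have h2 := h1 m (by omega)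
    rw [map_pow, map_mul, aeval_C, aeval_X, mul_pow, Polynomial.algebraMap_eq,
      ← Polynomial.C_pow, Polynomial.coeff_C_mul_X_pow, if_pos rfl] at h2
    exact pow_ne_zero m ha h2
  · intro h
    have hX : (X l : MvPolynomial (Fin v) F) ^ n ∈ degIdeal F v n := by
      refine Ideal.subset_span ⟨Pi.single l n, by simp, ?_⟩
      rw [Finset.prod_eq_single l] <;> simp +contextual
    rw [mul_pow]
    exact Ideal.mul_mem_left _ _ (Ideal.mem_of_dvd _ (pow_dvd_pow _ h) hX)

/-- For `a ∈ F_q^*` and `1 ≤ l ≤ v`, the element `1 + a·x_l` is a unit of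
`R = F_q[x_1,…,x_v]/⟨monomials of degree n⟩`, and its multiplicative order in the unit
group of `R` is `p^⌈log_p n⌉`. -/
theorem stmt_12 {p : ℕ} [Fact p.Prime] {F : Type} [Field F] [Fintype F] [CharP F p]
    (q : ℕ) (hq : Fintype.card F = q) (v : ℕ) (hv : 1 ≤ v) (n : ℕ) (hn : 1 ≤ n)
    (a : F) (ha : a ≠ 0) (l : Fin v) :
    IsUnit ((1 : MvPolynomial (Fin v) F ⧸ degIdeal F v n) +
        Ideal.Quotient.mk (degIdeal F v n) (C a * X l)) ∧
      ∀ u : (MvPolynomial (Fin v) F ⧸ degIdeal F v n)ˣ,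
        (u : MvPolynomial (Fin v) F ⧸ degIdeal F v n) =
            (1 : MvPolynomial (Fin v) F ⧸ degIdeal F v n) +
              Ideal.Quotient.mk (degIdeal F v n) (C a * X l) →
          orderOf u = p ^ Nat.clog p n := by
  have hp : p.Prime := Fact.out
  have hpow (k : ℕ) : ((1 : MvPolynomial (Fin v) F ⧸ degIdeal F v n) +
      Ideal.Quotient.mk (degIdeal F v n) (C a * X l)) ^ p ^ k = 1 ↔ Nat.clog p n ≤ k := by
    rw [Nat.clog_le_iff_le_pow hp.one_lt, ← pow_mem_degIdeal_iff ha l,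
      ← map_one (Ideal.Quotient.mk (degIdeal F v n)), ← map_add, ← map_pow,
      add_pow_char_pow, one_pow, map_add, add_eq_left, Ideal.Quotient.eq_zero_iff_mem]
  constructor
  · refine IsNilpotent.isUnit_one_add ⟨n, ?_⟩
    rw [← map_pow, Ideal.Quotient.eq_zero_iff_mem]
    exact (pow_mem_degIdeal_iff ha l n).2 le_rfl
  · intro u hu
    have hu' (k : ℕ) : u ^ p ^ k = 1 ↔ Nat.clog p n ≤ k := by
      rw [← hpow, ← hu, ← Units.val_pow_eq_pow_val, Units.val_eq_one]
    obtain ⟨j, hj, hord⟩ := (Nat.dvd_prime_pow hp).1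
      (orderOf_dvd_of_pow_eq_one ((hu' _).2 le_rfl))
    rw [hord, le_antisymm hj ((hu' j).1 (hord ▸ pow_orderOf_eq_one u))]
end

section
/- Let k be a positive integer with k ≤ min(p−1, n−1), let a_1,…,a_k be distinct elements of F_q^*, and let n_1,…,n_k be positive integers such that at least one n_i is not divisible by p. Then ∏_{i=1}^k (1 + a_i·x_1)^{n_i} ≠ 1 in R. -/
/-!
Substituting a single variable `X` for every `x_j` sends each monomial of degree `n` to `X ^ n`, so
an equality in the quotient ring yields `X ^ n ∣ P - 1` in `F[X]`, where
`P = ∏ i, (1 + a i * X) ^ e i`; hence `X ^ (n - 1)` divides `D P`, the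
derivative of `P`. Taking the logarithmic derivative,
`D P * ∏ i, (1 + a i * X) = P * S` with `S = ∑ i, e i * a i * ∏ j ≠ i, (1 + a j * X)`. Since `P` is
prime to `X`, also `X ^ (n - 1) ∣ S`; but `deg S ≤ k - 1 < n - 1`, so `S = 0`. Evaluating `S` at the
root `-1 / a i` of the `i`-th factor leaves only the `i`-th term, which forces `e i = 0` in `F`,
that is `p ∣ e i`, for every `i`.
-/

open MvPolynomial

/-- The numerator `∑ i, e i * a i * ∏ j ≠ i, (1 + a j * X)` of the logarithmic derivative of
`∏ i, (1 + a i * X) ^ e i`. -/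
noncomputable def logDerivNum {F : Type} [Field F] {k : ℕ} (a : Fin k → F) (e : Fin k → ℕ) :
    Polynomial F :=
  ∑ i, Polynomial.C ((e i : F) * a i) *
    ∏ j ∈ Finset.univ.erase i, (1 + Polynomial.C (a j) * Polynomial.X)

lemma derivative_mul_prod {F : Type} [Field F] {k : ℕ} (a : Fin k → F) (e : Fin k → ℕ)
    (he : ∀ i, 1 ≤ e i) :
    Polynomial.derivative (∏ i, (1 + Polynomial.C (a i) * Polynomial.X) ^ e i) *
        ∏ i, (1 + Polynomial.C (a i) * Polynomial.X) =
      (∏ i, (1 + Polynomial.C (a i) * Polynomial.X) ^ e i) * logDerivNum a e := by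
  rw [Polynomial.derivative_prod_finset, logDerivNum, Finset.sum_mul, Finset.mul_sum]
  refine Finset.sum_congr rfl fun i hi => ?_
  rw [← Finset.mul_prod_erase _ (fun i => (1 + Polynomial.C (a i) * Polynomial.X)) hi,
    ← Finset.mul_prod_erase _ (fun i => (1 + Polynomial.C (a i) * Polynomial.X) ^ e i) hi]
  obtain ⟨m, hm⟩ := Nat.exists_eq_add_of_le' (he i)
  rw [hm]
  simp only [Polynomial.derivative_pow, Polynomial.derivative_add, Polynomial.derivative_one,
    Polynomial.derivative_C_mul, Polynomial.derivative_X, Nat.add_sub_cancel, map_mul]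
  ring

lemma natDegree_logDerivNum_le {F : Type} [Field F] {k : ℕ} (a : Fin k → F) (e : Fin k → ℕ) :
    (logDerivNum a e).natDegree ≤ k - 1 := by
  refine Polynomial.natDegree_sum_le_of_forall_le _ _ fun i hi => ?_
  refine (Polynomial.natDegree_C_mul_le _ _).trans ((Polynomial.natDegree_prod_le _ _).trans ?_)
  calc _ ≤ ∑ j ∈ Finset.univ.erase i, 1 := Finset.sum_le_sum fun j _ => by compute_degree
    _ = k - 1 := by simp

lemma eval_logDerivNum {F : Type} [Field F] {k : ℕ} (a : Fin k → F) (e : Fin k → ℕ)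
    (ha0 : ∀ i, a i ≠ 0) (i : Fin k) :
    (logDerivNum a e).eval (-(a i)⁻¹) =
      e i * a i * ∏ j ∈ Finset.univ.erase i, (1 - a j * (a i)⁻¹) := by
  rw [logDerivNum, Polynomial.eval_finsetSum, Finset.sum_eq_single i]
  · simp [Polynomial.eval_prod, sub_eq_add_neg]
  · intro j _ hj
    rw [Polynomial.eval_mul, Polynomial.eval_prod,
      Finset.prod_eq_zero (Finset.mem_erase.2 ⟨hj.symm, Finset.mem_univ i⟩), mul_zero]
    simp [ha0 i]
  · simp

lemma X_pow_dvd_of_mem_degIdeal {F : Type} [Field F] {v n : ℕ} {f : MvPolynomial (Fin v) F}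
    (hf : f ∈ degIdeal F v n) :
    (Polynomial.X : Polynomial F) ^ n ∣ aeval (fun _ => Polynomial.X) f := by
  have h : degIdeal F v n ≤
      (Ideal.span {(Polynomial.X : Polynomial F) ^ n}).comap
        (aeval (fun _ : Fin v => (Polynomial.X : Polynomial F))) := by
    rw [degIdeal, Ideal.span_le]
    rintro _ ⟨i, hi, rfl⟩
    simp [Finset.prod_pow_eq_pow_sum, hi]
  exact Ideal.mem_span_singleton.1 (h hf)

/-- For `1 ≤ k ≤ min(p-1, n-1)`, distinct `a_1, …, a_k ∈ F_q^*`, and positive integers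
`n_1, …, n_k` at least one of which is not divisible by `p`, the product
`∏ i, (1 + a_i·x_1)^{n_i}` is not equal to `1` in
`R = F_q[x_1,…,x_v]/⟨monomials of degree n⟩`. -/
theorem stmt_13 {p : ℕ} [Fact p.Prime] {F : Type} [Field F] [Fintype F] [CharP F p]
    (q : ℕ) (hq : Fintype.card F = q) (v : ℕ) (hv : 0 < v) (n : ℕ) (hn : 2 ≤ n)
    (k : ℕ) (hk : 1 ≤ k) (hkp : k ≤ min (p - 1) (n - 1))
    (a : Fin k → F) (ha0 : ∀ i, a i ≠ 0) (ha : Function.Injective a)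
    (e : Fin k → ℕ) (he : ∀ i, 1 ≤ e i) (hep : ∃ i, ¬ p ∣ e i) :
    (∏ i : Fin k,
        ((1 : MvPolynomial (Fin v) F ⧸ degIdeal F v n) +
          Ideal.Quotient.mk (degIdeal F v n) (C (a i) * X (⟨0, hv⟩ : Fin v))) ^ e i) ≠
      1 := by
  intro h
  set P : Polynomial F := ∏ i, (1 + Polynomial.C (a i) * Polynomial.X) ^ e i with hP
  have hdvd : Polynomial.X ^ n ∣ P - 1 := by
    have hmem : (∏ i : Fin k, (1 + C (a i) * X (⟨0, hv⟩ : Fin v)) ^ e i) - 1 ∈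
        degIdeal F v n := by
      rw [← Ideal.Quotient.eq_zero_iff_mem, map_sub, map_one, sub_eq_zero, ← h]
      simp only [map_prod, map_pow, map_add, map_one]
    have := X_pow_dvd_of_mem_degIdeal hmem
    simpa [hP, Polynomial.algebraMap_eq] using this
  have hder : Polynomial.X ^ (n - 1) ∣ Polynomial.derivative P := by
    have := Polynomial.pow_sub_one_dvd_derivative_of_pow_dvd hdvd
    simpa using this
  have hcop : IsCoprime ((Polynomial.X : Polynomial F) ^ (n - 1)) P := by
    refine IsCoprime.pow_left (Polynomial.prime_X.coprime_iff_not_dvd.2 ?_)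
    simp [Polynomial.X_dvd_iff, Polynomial.coeff_zero_eq_eval_zero, hP, Polynomial.eval_prod]
  have hS : Polynomial.X ^ (n - 1) ∣ logDerivNum a e :=
    hcop.dvd_of_dvd_mul_left (derivative_mul_prod a e he ▸ hder.mul_right _)
  have hS0 : logDerivNum a e = 0 := by
    refine Polynomial.eq_zero_of_dvd_of_natDegree_lt hS ?_
    have := natDegree_logDerivNum_le a e
    have := hkp.trans (min_le_right _ _)
    rw [Polynomial.natDegree_X_pow]
    omega
  obtain ⟨i, hi⟩ := hep
  have hev := eval_logDerivNum a e ha0 i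
  rw [hS0, Polynomial.eval_zero, eq_comm, mul_eq_zero, mul_eq_zero, Finset.prod_eq_zero_iff,
    CharP.cast_eq_zero_iff F p] at hev
  rcases hev with (hev | hev) | ⟨j, hj, hev⟩
  · exact hi hev
  · exact ha0 i hev
  · refine (Finset.mem_erase.1 hj).1 (ha ?_)
    rw [sub_eq_zero, ← div_eq_mul_inv, eq_div_iff (ha0 i), one_mul] at hev
    exact hev.symm
end
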